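/- Let 0 < ν < 1 and let f : ℝ → ℝ be bounded and continuous. Define for t > 0 the space convolution u(x,t) = ∫_{−∞}^{+∞} (1/(2 t^ν)) M_ν(|ξ|/t^ν) f(x−ξ) dξ. Then for every x ∈ ℝ, u(x,t) → f(x) as t → 0⁺; that is, the convolution solution of the Cauchy problem attains the initial datum u(x,0⁺) = f(x). -/

import Mathlib

open MeasureTheory

/-- The M-Wright function of order `ν ∈ [0,1)`:
`M_ν(z) = Σ_{n=0}^∞ (-z)ⁿ / (n! Γ(-νn + 1 - ν))`. Terms where `Γ` is evaluated at a
nonpositive integer are zero, since `Real.Gamma` vanishes at its poles. -/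
noncomputable def mWright (ν z : ℝ) : ℝ :=
  ∑' n : ℕ, (-z) ^ n / (n.factorial * Real.Gamma (-(ν * n) + 1 - ν))

open MeasureTheory Set Filter Topology

lemma mw_norm (s μ t : ℝ) (ht : 0 < t) (r : ℂ) :
    ‖((t ^ s : ℝ) : ℂ) * Complex.exp (-(r * (t ^ μ : ℝ)))‖ = t ^ s * Real.exp (-r.re * t ^ μ) := by
  rw [norm_mul, Complex.norm_exp, Complex.norm_real, Real.norm_of_nonneg (by positivity)]
  simp

lemma mw_meas (s μ : ℝ) (r : ℂ) :
    Measurable (fun t : ℝ => ((t ^ s : ℝ) : ℂ) * Complex.exp (-(r * (t ^ μ : ℝ)))) := by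
  fun_prop

lemma mw_int {s μ : ℝ} (hs : -1 < s) (hμ : 0 < μ) {r : ℂ} (hr : 0 < r.re) :
    IntegrableOn (fun t : ℝ => ((t ^ s : ℝ) : ℂ) * Complex.exp (-(r * (t ^ μ : ℝ)))) (Ioi 0) := by
  refine (integrableOn_rpow_mul_exp_neg_mul_rpow hs hμ hr).mono' (mw_meas s μ r).aestronglyMeasurable ?_
  filter_upwards [ae_restrict_mem measurableSet_Ioi] with t ht
  rw [mw_norm s μ t ht]

lemma mw_int1 {s : ℝ} (hs : -1 < s) {r : ℂ} (hr : 0 < r.re) :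
    IntegrableOn (fun t : ℝ => ((t ^ s : ℝ) : ℂ) * Complex.exp (-(r * t))) (Ioi 0) := by
  simpa using mw_int hs one_pos hr

lemma mw_ibp {a : ℝ} (ha : 0 < a) {r : ℂ} (hr : 0 < r.re) :
    r * ∫ t in Ioi (0:ℝ), ((t ^ a : ℝ) : ℂ) * Complex.exp (-(r * t)) =
      a * ∫ t in Ioi (0:ℝ), ((t ^ (a - 1) : ℝ) : ℂ) * Complex.exp (-(r * t)) := by
  have i1 := (mw_int1 (s := a) (by linarith) hr).const_mul r
  have i2 := (mw_int1 (s := a - 1) (by linarith) hr).const_mul (a : ℂ)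
  have key := integral_Ioi_of_hasDerivAt_of_tendsto (a := (0:ℝ)) (m := (0:ℂ))
    (f := fun t : ℝ => ((t ^ a : ℝ) : ℂ) * Complex.exp (-(r * t)))
    (f' := fun t : ℝ => (a:ℂ) * (((t ^ (a - 1) : ℝ) : ℂ) * Complex.exp (-(r * t))) -
      r * (((t ^ a : ℝ) : ℂ) * Complex.exp (-(r * t)))) ?_ ?_ (i2.sub i1) ?_
  · rw [integral_sub i2 i1, integral_const_mul, integral_const_mul] at key
    simp [Real.zero_rpow ha.ne'] at key
    linear_combination -key
  · apply ContinuousAt.continuousWithinAt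
    apply ContinuousAt.mul
    · apply Complex.continuous_ofReal.continuousAt.comp
      exact Real.continuousAt_rpow_const _ _ (Or.inr ha.le)
    · fun_prop
  · intro t ht
    have h1 := (Real.hasDerivAt_rpow_const (x := t) (p := a) (Or.inl (ne_of_gt ht))).ofReal_comp
    have h2 : HasDerivAt (fun t : ℝ => Complex.exp (-(r * t))) (Complex.exp (-(r * t)) * (-r)) t := by
      have h3 := ((Complex.ofRealCLM.hasDerivAt (x := t)).const_mul r).neg.cexp
      simpa using! h3
    convert! h1.mul h2 using 1
    push_cast
    ring
  · rw [tendsto_zero_iff_norm_tendsto_zero]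
    have := tendsto_rpow_mul_exp_neg_mul_atTop_nhds_zero a r.re hr
    refine this.congr' ?_
    filter_upwards [eventually_gt_atTop 0] with t ht
    have := mw_norm a 1 t ht r
    simpa using this.symm

lemma mw_gamma {a : ℝ} (ha : 0 < a) {r : ℂ} (hr : 0 < r.re) :
    r ^ (a : ℂ) * ∫ t in Ioi (0:ℝ), ((t ^ (a - 1) : ℝ) : ℂ) * Complex.exp (-(r * t)) =
      Real.Gamma a := by
  set F : ℂ → ℂ := fun r => ∫ t in Ioi (0:ℝ), ((t ^ (a - 1) : ℝ) : ℂ) * Complex.exp (-(r * t)) with hF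
  have hd : ∀ r : ℂ, 0 < r.re → HasDerivAt F
      (∫ t in Ioi (0:ℝ), -(((t ^ a : ℝ) : ℂ) * Complex.exp (-(r * t)))) r := by
    intro r hr
    have hs : {w : ℂ | r.re / 2 < w.re} ∈ 𝓝 r :=
      (isOpen_lt continuous_const Complex.continuous_re).mem_nhds (by simp; linarith)
    refine (hasDerivAt_integral_of_dominated_loc_of_deriv_le (𝕜 := ℂ)
      (F := fun (r : ℂ) (t : ℝ) => ((t ^ (a - 1) : ℝ) : ℂ) * Complex.exp (-(r * t)))
      (F' := fun (r : ℂ) (t : ℝ) => -(((t ^ a : ℝ) : ℂ) * Complex.exp (-(r * t))))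
      (bound := fun t => t ^ a * Real.exp (-(r.re/2) * t ^ (1:ℝ))) hs ?_ ?_ ?_ ?_ ?_ ?_).2
    · filter_upwards with w
      apply Measurable.aestronglyMeasurable
      fun_prop
    · exact mw_int1 (by linarith) hr
    · apply Measurable.aestronglyMeasurable
      fun_prop
    · filter_upwards [ae_restrict_mem measurableSet_Ioi] with t ht w hw
      rw [norm_neg]
      have := mw_norm a 1 t ht w
      simp only [Real.rpow_one] at this ⊢
      rw [this]
      have : 0 < t := ht
      have hw' : r.re / 2 < w.re := hw
      gcongr
    · exact integrableOn_rpow_mul_exp_neg_mul_rpow (by linarith) one_pos (by linarith)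
    · filter_upwards [ae_restrict_mem measurableSet_Ioi] with t ht w hw
      have h2 : HasDerivAt (fun w : ℂ => Complex.exp (-(w * t))) (Complex.exp (-(w * t)) * (-t)) w := by
        have h3 := ((hasDerivAt_id w).mul_const (t:ℂ)).neg.cexp
        simpa using! h3
      convert! h2.const_mul ((t ^ (a-1) : ℝ) : ℂ) using 1
      have : t ^ a = t ^ (a - 1) * t := by
        have ht' : t ≠ 0 := ne_of_gt (show 0 < t from ht)
        rw [Real.rpow_sub_one ht']; field_simp
      rw [this]; push_cast; ring
  have hopen : IsOpen {w : ℂ | 0 < w.re} := isOpen_lt continuous_const Complex.continuous_re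
  have hconv : Convex ℝ {w : ℂ | 0 < w.re} := convex_halfSpace_re_gt 0
  have hG : ∀ w : ℂ, 0 < w.re → HasDerivAt (fun w : ℂ => w ^ (a:ℂ) * F w) 0 w := by
    intro w hw
    have hw0 : w ≠ 0 := by rintro rfl; simp at hw
    have h1 : HasDerivAt (fun w : ℂ => w ^ (a:ℂ)) ((a:ℂ) * w ^ ((a:ℂ) - 1)) w := by
      have := (hasDerivAt_id w).cpow_const (c := (a:ℂ)) (Or.inl hw)
      simpa using! this
    convert! h1.mul (hd w hw) using 1
    rw [integral_neg, Complex.cpow_sub _ _ hw0, Complex.cpow_one]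
    have := mw_ibp ha hw
    simp only [hF]
    field_simp
    linear_combination w ^ (a:ℂ) * this
  have hc := hopen.is_const_of_deriv_eq_zero hconv.isPreconnected
    (f := fun w : ℂ => w ^ (a:ℂ) * F w)
    (fun w hw => (hG w hw).differentiableAt.differentiableWithinAt)
    (fun w hw => (hG w hw).deriv) hr (show (1:ℂ) ∈ {w : ℂ | 0 < w.re} by simp)
  refine hc.trans ?_
  simp only [Complex.one_cpow, one_mul, hF]
  have := Real.integral_rpow_mul_exp_neg_mul_Ioi ha one_pos
  simp only [one_mul, div_one, Real.one_rpow] at this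
  rw [← this]
  refine Eq.trans ?_ (integral_ofReal (𝕜 := ℂ))
  simp


lemma mw_gamma_angle {a φ : ℝ} (ha : 0 < a) (h1 : -(Real.pi / 2) < φ) (h2 : φ < Real.pi / 2) :
    ∫ t in Ioi (0:ℝ), ((t ^ (a - 1) : ℝ) : ℂ) * Complex.exp (-(Complex.exp (φ * Complex.I) * t)) =
      Complex.exp (-(a * φ) * Complex.I) * Real.Gamma a := by
  have hr : 0 < (Complex.exp (φ * Complex.I)).re := by
    rw [Complex.exp_ofReal_mul_I_re]
    exact Real.cos_pos_of_mem_Ioo ⟨h1, h2⟩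
  rw [← mw_gamma ha hr, ← mul_assoc, Complex.cpow_def_of_ne_zero (Complex.exp_ne_zero _),
    Complex.log_exp (by simp; linarith [Real.pi_pos]) (by simp; linarith [Real.pi_pos]),
    ← Complex.exp_add]
  ring_nf
  simp

lemma mw_subst {ν b : ℝ} (hν : 0 < ν) (r : ℂ) :
    ∫ t in Ioi (0:ℝ), ((t ^ (ν * b - 1) : ℝ) : ℂ) * Complex.exp (-(r * (t ^ ν : ℝ))) =
      (ν : ℂ)⁻¹ * ∫ t in Ioi (0:ℝ), ((t ^ (b - 1) : ℝ) : ℂ) * Complex.exp (-(r * t)) := by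
  rw [← integral_comp_rpow_Ioi_of_pos
    (g := fun t : ℝ => ((t ^ (b - 1) : ℝ) : ℂ) * Complex.exp (-(r * t))) hν, ← integral_const_mul]
  refine setIntegral_congr_fun measurableSet_Ioi fun t ht => ?_
  have ht : 0 < t := ht
  have : t ^ (ν * b - 1) = t ^ (ν - 1) * (t ^ ν) ^ (b - 1) := by
    rw [← Real.rpow_mul ht.le, ← Real.rpow_add ht]; ring_nf
  have hν' : (ν : ℂ) ≠ 0 := by exact_mod_cast hν.ne'
  simp only [this, Complex.real_smul]
  push_cast
  field_simp

lemma mw_young {ν k : ℝ} (hν0 : 0 < ν) (hν1 : ν < 1) (hk : 0 < k) (z : ℝ) (hz : 0 ≤ z) :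
    ∃ C, ∀ t : ℝ, 0 < t → z * t ^ ν ≤ k * t + C := by
  have h1 : Tendsto (fun t : ℝ => z * t ^ (-(1 - ν))) atTop (𝓝 (z * 0)) :=
    (tendsto_rpow_neg_atTop (by linarith)).const_mul z
  rw [mul_zero] at h1
  obtain ⟨T, hT⟩ := ((h1.eventually (gt_mem_nhds hk)).and (eventually_gt_atTop 0)).exists_forall_of_atTop
  have hT0 := (hT T le_rfl).2
  refine ⟨z * T ^ ν, fun t ht => ?_⟩
  rcases le_total T t with h | h
  · have h3 := (hT t h).1
    have : t ^ ν = t ^ (-(1 - ν)) * t := by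
      rw [← Real.rpow_add_one ht.ne']; ring_nf
    rw [this]
    have : 0 ≤ z * T ^ ν := by positivity
    nlinarith
  · have : z * t ^ ν ≤ z * T ^ ν := by gcongr
    nlinarith

noncomputable def mwE (α : ℝ) : ℂ := Complex.exp (α * Complex.I)

lemma mwE_norm (α : ℝ) : ‖mwE α‖ = 1 := Complex.norm_exp_ofReal_mul_I α

lemma mwE_re (α : ℝ) : (mwE α).re = Real.cos α := Complex.exp_ofReal_mul_I_re α

lemma mwE_ne (α : ℝ) : mwE α ≠ 0 := Complex.exp_ne_zero _

lemma mw_refl {a : ℝ} (ha : 0 < a) :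
    Real.Gamma a * Real.sin (Real.pi * a) = Real.pi * (Real.Gamma (1 - a))⁻¹ := by
  have h := Real.Gamma_mul_Gamma_one_sub a
  have hg := (Real.Gamma_pos_of_pos ha).ne'
  by_cases hs : Real.sin (Real.pi * a) = 0
  · rw [hs, div_zero] at h
    rcases mul_eq_zero.1 h with h | h
    · exact absurd h hg
    · simp [hs, h]
  · have : Real.Gamma (1 - a) ≠ 0 := by
      intro h0
      rw [h0, mul_zero] at h
      exact (div_ne_zero Real.pi_ne_zero hs) h.symm
    rw [eq_div_iff hs] at h
    rw [eq_mul_inv_iff_mul_eq₀ this]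
    linarith

lemma mw_term {ν α : ℝ} (hν0 : 0 < ν) (hα0 : 0 < α) (hα1 : α < Real.pi / 2)
    (hα : α * (1 + ν) = Real.pi * ν) (z : ℝ) (n : ℕ) :
    (∫ t in Ioi (0:ℝ), (((-z) ^ n / n.factorial : ℝ) : ℂ) * mwE α ^ (n + 1) *
      (((t ^ (ν * (n + 1) - 1) : ℝ) : ℂ) * Complex.exp (-(mwE (-α) * t)))).im =
    Real.pi * ((-z) ^ n / (n.factorial * Real.Gamma (-(ν * n) + 1 - ν))) := by
  have ha : 0 < ν * (n + 1) := by positivity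
  rw [integral_const_mul, mwE, mwE, mw_gamma_angle ha (by linarith) (by linarith)]
  have : (((-z) ^ n / n.factorial : ℝ) : ℂ) * Complex.exp (α * Complex.I) ^ (n + 1) *
      (Complex.exp (-((ν * (n + 1) : ℝ) * (-α : ℝ)) * Complex.I) * Real.Gamma (ν * (n + 1))) =
      (((-z) ^ n / n.factorial * Real.Gamma (ν * (n + 1)) : ℝ) : ℂ) *
        Complex.exp ((Real.pi * (ν * (n + 1)) : ℝ) * Complex.I) := by
    rw [← Complex.exp_nat_mul]
    have e : ((Real.pi * (ν * (n + 1)) : ℝ) : ℂ) * Complex.I =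
      ((n + 1 : ℕ) : ℂ) * (α * Complex.I) + -((ν * (n + 1) : ℝ) * (-α : ℝ)) * Complex.I := by
      have : Real.pi * (ν * (n + 1)) = (n + 1) * α + (ν * (n + 1)) * α := by
        linear_combination -(n + 1 : ℝ) * hα
      rw [this]; push_cast; ring
    rw [e, Complex.exp_add]
    push_cast
    ring
  rw [this, Complex.im_ofReal_mul, Complex.exp_ofReal_mul_I_im, mul_assoc, mw_refl ha]
  have : 1 - ν * (n + 1) = -(ν * n) + 1 - ν := by ring
  rw [this]
  simp only [div_eq_mul_inv, mul_inv]
  ring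

lemma mw_pow {ν t : ℝ} (ht : 0 < t) (n : ℕ) :
    t ^ (ν * (n + 1) - 1) = t ^ (ν - 1) * (t ^ ν) ^ n := by
  rw [← Real.rpow_natCast, ← Real.rpow_mul ht.le, ← Real.rpow_add ht]; ring_nf

lemma mw_repr {ν α : ℝ} (hν0 : 0 < ν) (hν1 : ν < 1) (hα0 : 0 < α) (hα1 : α < Real.pi / 2)
    (hα : α * (1 + ν) = Real.pi * ν) (z : ℝ) :
    mWright ν z = Real.pi⁻¹ * (∫ t in Ioi (0:ℝ), mwE α * ((t ^ (ν - 1) : ℝ) : ℂ) *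
      Complex.exp (-(mwE (-α) * t)) * Complex.exp (-(z * mwE α * (t ^ ν : ℝ)))).im := by
  have hk : 0 < Real.cos α := Real.cos_pos_of_mem_Ioo ⟨by linarith, hα1⟩
  have hB : ∀ t : ℝ, 0 < t → HasSum (fun n : ℕ => |z| ^ n / n.factorial *
      (t ^ (ν * (n + 1) - 1) * Real.exp (-Real.cos α * t)))
      (t ^ (ν - 1) * Real.exp (-Real.cos α * t) * Real.exp (|z| * t ^ ν)) := by
    intro t ht
    have := (NormedSpace.expSeries_div_hasSum_exp (|z| * t ^ ν)).mul_left
      (t ^ (ν - 1) * Real.exp (-Real.cos α * t))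
    rw [← Real.exp_eq_exp_ℝ] at this
    refine this.congr_fun ?_
    intro n
    rw [mw_pow ht, mul_pow]
    ring
  have hS := hasSum_integral_of_dominated_convergence (μ := volume.restrict (Ioi (0:ℝ)))
    (F := fun (n : ℕ) (t : ℝ) => (((-z) ^ n / n.factorial : ℝ) : ℂ) * mwE α ^ (n + 1) *
      (((t ^ (ν * (n + 1) - 1) : ℝ) : ℂ) * Complex.exp (-(mwE (-α) * t))))
    (f := fun t : ℝ => mwE α * ((t ^ (ν - 1) : ℝ) : ℂ) *
      Complex.exp (-(mwE (-α) * t)) * Complex.exp (-(z * mwE α * (t ^ ν : ℝ))))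
    (fun (n : ℕ) (t : ℝ) => |z| ^ n / n.factorial *
      (t ^ (ν * (n + 1) - 1) * Real.exp (-Real.cos α * t))) ?_ ?_ ?_ ?_ ?_
  · have h2 := hS.mapL Complex.imCLM
    simp only [Complex.imCLM_apply, mw_term hν0 hα0 hα1 hα] at h2
    have h3 := (h2.mul_left Real.pi⁻¹).tsum_eq
    rw [← h3, mWright]
    congr 1
    ext n
    field_simp [Real.pi_ne_zero]
  · intro n
    apply Measurable.aestronglyMeasurable
    fun_prop
  · intro n
    filter_upwards [ae_restrict_mem measurableSet_Ioi] with t ht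
    have := mw_norm (ν * (n + 1) - 1) 1 t ht (mwE (-α))
    simp only [Real.rpow_one, mwE_re, Real.cos_neg] at this
    rw [norm_mul, norm_mul, norm_pow, mwE_norm, this, Complex.norm_real, norm_div, norm_pow]
    simp
  · filter_upwards [ae_restrict_mem measurableSet_Ioi] with t ht
    exact (hB t ht).summable
  · obtain ⟨C, hC⟩ := mw_young hν0 hν1 (half_pos hk) |z| (abs_nonneg z)
    have hi := (integrableOn_rpow_mul_exp_neg_mul_rpow (s := ν - 1) (p := 1)
      (by linarith) one_pos (half_pos hk)).const_mul (Real.exp C)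
    have he : IntegrableOn (fun t => t ^ (ν - 1) * Real.exp (-Real.cos α * t) *
        Real.exp (|z| * t ^ ν)) (Ioi 0) := by
      refine hi.mono' (Measurable.aestronglyMeasurable (by fun_prop)) ?_
      filter_upwards [ae_restrict_mem measurableSet_Ioi] with t ht
      have ht : 0 < t := ht
      rw [Real.norm_of_nonneg (by positivity), mul_assoc, ← Real.exp_add, mul_left_comm,
        ← Real.exp_add]
      refine mul_le_mul_of_nonneg_left (Real.exp_le_exp.2 ?_) (by positivity)
      have := hC t ht
      rw [Real.rpow_one]
      linarith
    refine he.congr_fun ?_ measurableSet_Ioi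
    intro t ht
    exact (hB t ht).tsum_eq.symm
  · filter_upwards [ae_restrict_mem measurableSet_Ioi] with t ht
    have := (NormedSpace.expSeries_div_hasSum_exp (-(z * mwE α * (t ^ ν : ℝ)))).mul_left
      (mwE α * ((t ^ (ν - 1) : ℝ) : ℂ) * Complex.exp (-(mwE (-α) * t)))
    rw [← Complex.exp_eq_exp_ℂ] at this
    refine this.congr_fun ?_
    intro n
    have e : -(z * mwE α * (t ^ ν : ℝ)) = (-z : ℂ) * (mwE α * (t ^ ν : ℝ)) := by ring
    rw [mw_pow ht, e, mul_pow, mul_pow]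
    push_cast
    ring

lemma mw_real {ν α : ℝ} (hν0 : 0 < ν) (hα0 : 0 < α) (hα1 : α < Real.pi / 2)
    (z : ℝ) (hz : 0 ≤ z) :
    IntegrableOn (fun t : ℝ => mwE α * ((t ^ (ν - 1) : ℝ) : ℂ) *
      Complex.exp (-(mwE α * (t ^ ν : ℝ))) * Complex.exp (-(z * mwE α * (t ^ ν : ℝ)))) (Ioi 0) ∧
    (∫ t in Ioi (0:ℝ), mwE α * ((t ^ (ν - 1) : ℝ) : ℂ) *
      Complex.exp (-(mwE α * (t ^ ν : ℝ))) * Complex.exp (-(z * mwE α * (t ^ ν : ℝ)))).im = 0 := by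
  have hk : 0 < Real.cos α := Real.cos_pos_of_mem_Ioo ⟨by linarith, hα1⟩
  have hr : 0 < (((z + 1 : ℝ) : ℂ) * mwE α).re := by
    rw [Complex.re_ofReal_mul, mwE_re]; positivity
  have e : (fun t : ℝ => mwE α * ((t ^ (ν - 1) : ℝ) : ℂ) *
      Complex.exp (-(mwE α * (t ^ ν : ℝ))) * Complex.exp (-(z * mwE α * (t ^ ν : ℝ)))) =
      fun t : ℝ => mwE α * (((t ^ (ν - 1) : ℝ) : ℂ) *
        Complex.exp (-(((z + 1 : ℝ) : ℂ) * mwE α * (t ^ ν : ℝ)))) := by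
    ext t
    rw [mul_assoc, ← Complex.exp_add, mul_assoc]
    push_cast
    ring_nf
  rw [e]
  refine ⟨(mw_int (by linarith) hν0 hr).const_mul _, ?_⟩
  have h1 := mw_subst (b := 1) hν0 (((z + 1 : ℝ) : ℂ) * mwE α)
  have h2 := mw_gamma one_pos hr
  rw [mul_one] at h1
  rw [integral_const_mul, h1]
  simp only [Complex.ofReal_one, Complex.cpow_one, Real.Gamma_one] at h2
  set X := ∫ t in Ioi (0:ℝ), ((t ^ ((1:ℝ) - 1) : ℝ) : ℂ) * Complex.exp (-(((z + 1 : ℝ) : ℂ) * mwE α * t))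
  have hz1 : ((z + 1 : ℝ) : ℂ) ≠ 0 := by exact_mod_cast (by positivity : z + 1 ≠ 0)
  have : mwE α * ((ν : ℂ)⁻¹ * X) = ((ν⁻¹ * (z + 1)⁻¹ : ℝ) : ℂ) := by
    have : mwE α * X = ((z + 1 : ℝ) : ℂ)⁻¹ := by
      field_simp; linear_combination h2
    rw [mul_left_comm, this]; push_cast; ring
  rw [this, Complex.ofReal_im]

lemma mw_int_first {ν α : ℝ} (hν0 : 0 < ν) (hα0 : 0 < α) (hα1 : α < Real.pi / 2)
    (z : ℝ) (hz : 0 ≤ z) :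
    IntegrableOn (fun t : ℝ => mwE α * ((t ^ (ν - 1) : ℝ) : ℂ) *
      Complex.exp (-(mwE (-α) * t)) * Complex.exp (-(z * mwE α * (t ^ ν : ℝ)))) (Ioi 0) := by
  have hk : 0 < Real.cos α := Real.cos_pos_of_mem_Ioo ⟨by linarith, hα1⟩
  refine (integrableOn_rpow_mul_exp_neg_mul_rpow (s := ν - 1) (p := 1)
      (by linarith) one_pos hk).mono' (Measurable.aestronglyMeasurable (by fun_prop)) ?_
  filter_upwards [ae_restrict_mem measurableSet_Ioi] with t ht
  have ht : 0 < t := ht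
  have := mw_norm (ν - 1) 1 t ht (mwE (-α))
  simp only [Real.rpow_one, mwE_re, Real.cos_neg] at this
  rw [mul_assoc (mwE α), norm_mul, norm_mul, this, mwE_norm, Complex.norm_exp, one_mul, Real.rpow_one]
  apply mul_le_of_le_one_right (by positivity)
  rw [Real.exp_le_one_iff, Complex.neg_re, Complex.re_mul_ofReal, Complex.re_ofReal_mul, mwE_re]
  have : 0 ≤ z * Real.cos α * t ^ ν := by positivity
  linarith

noncomputable def mwD (ν α t : ℝ) : ℂ :=
  Complex.exp (-(mwE (-α) * t)) - Complex.exp (-(mwE α * (t ^ ν : ℝ)))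

lemma mw_repr2 {ν α : ℝ} (hν0 : 0 < ν) (hν1 : ν < 1) (hα0 : 0 < α) (hα1 : α < Real.pi / 2)
    (hα : α * (1 + ν) = Real.pi * ν) (z : ℝ) (hz : 0 ≤ z) :
    mWright ν z = Real.pi⁻¹ * (∫ t in Ioi (0:ℝ), mwE α * ((t ^ (ν - 1) : ℝ) : ℂ) *
      mwD ν α t * Complex.exp (-(z * mwE α * (t ^ ν : ℝ)))).im := by
  have h1 := mw_int_first hν0 hα0 hα1 z hz
  obtain ⟨h2, h3⟩ := mw_real hν0 hα0 hα1 z hz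
  rw [mw_repr hν0 hν1 hα0 hα1 hα]
  simp only [mwD, mul_sub, sub_mul]
  rw [integral_sub h1 h2, Complex.sub_im, h3, sub_zero]


lemma mwD_meas (ν α : ℝ) : Measurable (mwD ν α) := by
  unfold mwD; fun_prop

lemma mwD_bound {ν α : ℝ} (hν0 : 0 < ν) (hα0 : 0 < α) (hα1 : α < Real.pi / 2) (t : ℝ) (ht : 0 < t) :
    ‖mwD ν α t‖ ≤ Real.exp (Real.cos α) * ((t + t ^ ν) *
      (Real.exp (-Real.cos α * t) + Real.exp (-Real.cos α * t ^ ν))) := by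
  have hk : 0 < Real.cos α := Real.cos_pos_of_mem_Ioo ⟨by linarith, hα1⟩
  have htν : 0 < t ^ ν := by positivity
  rcases le_total t 1 with h | h
  · have htν1 : t ^ ν ≤ 1 := Real.rpow_le_one ht.le h hν0.le
    have n1 : ‖-(mwE (-α) * t)‖ = t := by
      rw [norm_neg, norm_mul, mwE_norm, Complex.norm_real, Real.norm_of_nonneg ht.le, one_mul]
    have n2 : ‖-(mwE α * (t ^ ν : ℝ))‖ = t ^ ν := by
      rw [norm_neg, norm_mul, mwE_norm, Complex.norm_real, Real.norm_of_nonneg htν.le, one_mul]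
    have b1 := Complex.norm_exp_sub_one_le (n1.trans_le h)
    have b2 := Complex.norm_exp_sub_one_le (n2.trans_le htν1)
    rw [n1] at b1
    rw [n2] at b2
    have b3 : ‖mwD ν α t‖ ≤ 2 * t + 2 * t ^ ν := by
      have : mwD ν α t = (Complex.exp (-(mwE (-α) * t)) - 1) -
        (Complex.exp (-(mwE α * (t ^ ν : ℝ))) - 1) := by unfold mwD; ring
      rw [this]
      exact (norm_sub_le _ _).trans (add_le_add b1 b2)
    have e1 : Real.exp (-Real.cos α) ≤ Real.exp (-Real.cos α * t) := by
      rw [Real.exp_le_exp]; nlinarith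
    have e2 : Real.exp (-Real.cos α) ≤ Real.exp (-Real.cos α * t ^ ν) := by
      rw [Real.exp_le_exp]; nlinarith
    calc ‖mwD ν α t‖ ≤ 2 * t + 2 * t ^ ν := b3
      _ = Real.exp (Real.cos α) * ((t + t ^ ν) *
        (Real.exp (-Real.cos α) + Real.exp (-Real.cos α))) := by
          rw [Real.exp_neg]; field_simp; ring
      _ ≤ _ := by gcongr
  · have b3 : ‖mwD ν α t‖ ≤ Real.exp (-Real.cos α * t) + Real.exp (-Real.cos α * t ^ ν) := by
      refine (norm_sub_le _ _).trans (le_of_eq ?_)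
      rw [Complex.norm_exp, Complex.norm_exp, Complex.neg_re, Complex.neg_re,
        Complex.re_mul_ofReal, Complex.re_mul_ofReal, mwE_re, mwE_re, Real.cos_neg, neg_mul, neg_mul]
    refine b3.trans ?_
    set S := Real.exp (-Real.cos α * t) + Real.exp (-Real.cos α * t ^ ν)
    have hS : 0 ≤ S := by positivity
    have h1 : 1 ≤ Real.exp (Real.cos α) := Real.one_le_exp hk.le
    calc S ≤ (t + t ^ ν) * S := le_mul_of_one_le_left hS (by linarith)
      _ ≤ _ := le_mul_of_one_le_left (by positivity) h1

noncomputable def mwB (ν α t : ℝ) : ℝ :=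
  Real.exp (Real.cos α) * ((1 + t) * (1 + t ^ (ν - 1)) *
      (Real.exp (-Real.cos α * t) + Real.exp (-Real.cos α * t ^ ν)))

lemma mwB_int {ν α : ℝ} (hν0 : 0 < ν) (hα0 : 0 < α) (hα1 : α < Real.pi / 2) :
    IntegrableOn (mwB ν α) (Ioi 0) := by
  have hk : 0 < Real.cos α := Real.cos_pos_of_mem_Ioo ⟨by linarith, hα1⟩
  have I : ∀ s μ : ℝ, -1 < s → 0 < μ →
    IntegrableOn (fun t : ℝ => t ^ s * Real.exp (-Real.cos α * t ^ μ)) (Ioi 0) :=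
    fun s μ hs hμ => integrableOn_rpow_mul_exp_neg_mul_rpow hs hμ hk
  have J : ∀ μ : ℝ, 0 < μ → IntegrableOn (fun t : ℝ => (1 + t) * (1 + t ^ (ν - 1)) *
      Real.exp (-Real.cos α * t ^ μ)) (Ioi 0) := by
    intro μ hμ
    have := (((I 0 μ (by norm_num) hμ).add (I 1 μ (by norm_num) hμ)).add
      (I (ν - 1) μ (by linarith) hμ)).add (I ν μ (by linarith) hμ)
    refine IntegrableOn.congr_fun this ?_ measurableSet_Ioi
    intro t ht
    have ht : 0 < t := ht
    have : t ^ ν = t * t ^ (ν - 1) := by rw [Real.rpow_sub_one ht.ne']; field_simp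
    simp only [Pi.add_apply, Real.rpow_zero, Real.rpow_one]
    rw [this]
    ring
  have := ((J 1 one_pos).add (J ν hν0)).const_mul (Real.exp (Real.cos α))
  refine IntegrableOn.congr_fun this ?_ measurableSet_Ioi
  intro t ht
  simp only [Pi.add_apply, Real.rpow_one, mwB]
  ring

lemma mwD_boundB {ν α : ℝ} (hν0 : 0 < ν) (hα0 : 0 < α) (hα1 : α < Real.pi / 2) (t : ℝ) (ht : 0 < t)
    (ε : ℝ) (hε0 : 0 ≤ ε) (hε1 : ε ≤ 1) :
    ‖((t ^ (ε - 1) : ℝ) : ℂ) * mwD ν α t‖ ≤ mwB ν α t := by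
  have h := mwD_bound hν0 hα0 hα1 t ht
  rw [norm_mul, Complex.norm_real, Real.norm_of_nonneg (by positivity)]
  have h1 : t ^ ε ≤ 1 + t := by
    rcases le_total t 1 with h | h
    · exact (Real.rpow_le_one ht.le h hε0).trans (by linarith)
    · exact (Real.rpow_le_rpow_of_exponent_le h hε1).trans (by rw [Real.rpow_one]; linarith)
  calc _ ≤ t ^ (ε - 1) * (Real.exp (Real.cos α) * ((t + t ^ ν) *
      (Real.exp (-Real.cos α * t) + Real.exp (-Real.cos α * t ^ ν)))) := by gcongr
    _ = Real.exp (Real.cos α) * (t ^ ε * (1 + t ^ (ν - 1)) *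
      (Real.exp (-Real.cos α * t) + Real.exp (-Real.cos α * t ^ ν))) := by
        rw [Real.rpow_sub_one ht.ne', Real.rpow_sub_one ht.ne']; field_simp
    _ ≤ _ := by unfold mwB; gcongr

lemma mwD_int {ν α : ℝ} (hν0 : 0 < ν) (hα0 : 0 < α) (hα1 : α < Real.pi / 2)
    (ε : ℝ) (hε0 : 0 ≤ ε) (hε1 : ε ≤ 1) :
    IntegrableOn (fun t : ℝ => ((t ^ (ε - 1) : ℝ) : ℂ) * mwD ν α t) (Ioi 0) := by
  have := mwD_meas ν α
  refine (mwB_int hν0 hα0 hα1).mono' (Measurable.aestronglyMeasurable (by fun_prop)) ?_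
  filter_upwards [ae_restrict_mem measurableSet_Ioi] with t ht
  exact mwD_boundB hν0 hα0 hα1 t ht ε hε0 hε1

lemma mw_gsin (α : ℝ) :
    Tendsto (fun ε : ℝ => Real.Gamma ε * Real.sin (ε * α)) (𝓝[>] 0) (𝓝 α) := by
  have h1 : Tendsto (fun ε : ℝ => Real.Gamma (ε + 1)) (𝓝[>] 0) (𝓝 1) := by
    have : ContinuousAt Real.Gamma (0 + 1) := by
      rw [zero_add]
      exact (Real.differentiableAt_Gamma (fun m => by
        have : (0:ℝ) ≤ m := Nat.cast_nonneg m
        linarith)).continuousAt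
    have h2 : ContinuousAt (fun ε : ℝ => Real.Gamma (ε + 1)) 0 :=
      ContinuousAt.comp' this (by fun_prop)
    have h3 := h2.tendsto
    rw [zero_add, Real.Gamma_one] at h3
    exact h3.mono_left nhdsWithin_le_nhds
  have h2 : Tendsto (fun ε : ℝ => ε⁻¹ * Real.sin (ε * α)) (𝓝[>] 0) (𝓝 α) := by
    have h := ((hasDerivAt_id (0:ℝ)).mul_const α).sin
    have h := h.tendsto_slope_zero_right
    simpa using! h
  have h3 := h1.mul h2
  rw [one_mul] at h3
  refine h3.congr' ?_
  filter_upwards [self_mem_nhdsWithin] with ε hε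
  have : ε ≠ 0 := ne_of_gt (show 0 < ε from hε)
  rw [Real.Gamma_add_one this]
  field_simp

lemma mw_frullani {ν α : ℝ} (hν0 : 0 < ν) (hα0 : 0 < α) (hα1 : α < Real.pi / 2)
    (hα : α * (1 + ν) = Real.pi * ν) :
    (∫ t in Ioi (0:ℝ), ((t ^ ((0:ℝ) - 1) : ℝ) : ℂ) * mwD ν α t).im = Real.pi := by
  have hk : 0 < Real.cos α := Real.cos_pos_of_mem_Ioo ⟨by linarith, hα1⟩
  have hD := mwD_meas ν α
  have hlim : Tendsto (fun ε : ℝ => ∫ t in Ioi (0:ℝ), ((t ^ (ε - 1) : ℝ) : ℂ) * mwD ν α t) (𝓝[>] 0)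
      (𝓝 (∫ t in Ioi (0:ℝ), ((t ^ ((0:ℝ) - 1) : ℝ) : ℂ) * mwD ν α t)) := by
    apply tendsto_integral_filter_of_dominated_convergence (mwB ν α)
    · filter_upwards with ε
      exact Measurable.aestronglyMeasurable (by fun_prop)
    · filter_upwards [Ioc_mem_nhdsGT (zero_lt_one (α := ℝ))] with ε hε
      filter_upwards [ae_restrict_mem measurableSet_Ioi] with t ht
      exact mwD_boundB hν0 hα0 hα1 t ht ε hε.1.le hε.2
    · exact mwB_int hν0 hα0 hα1
    · filter_upwards [ae_restrict_mem measurableSet_Ioi] with t ht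
      have : t ≠ 0 := ne_of_gt (show 0 < t from ht)
      refine Tendsto.mul_const _ ?_
      refine (Complex.continuous_ofReal.tendsto _).comp ?_
      have : ContinuousAt (fun ε : ℝ => t ^ (ε - 1)) 0 :=
        ContinuousAt.rpow continuousAt_const (by fun_prop) (Or.inl this)
      exact this.tendsto.mono_left nhdsWithin_le_nhds
  have hlim2 := (Complex.continuous_im.tendsto _).comp hlim
  have hval : ∀ ε : ℝ, 0 < ε → (∫ t in Ioi (0:ℝ), ((t ^ (ε - 1) : ℝ) : ℂ) * mwD ν α t).im =
      Real.Gamma ε * Real.sin (ε * α) + ν⁻¹ * (Real.Gamma (ε / ν) * Real.sin ((ε / ν) * α)) := by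
    intro ε hε
    have i1 := mw_int1 (s := ε - 1) (r := mwE (-α)) (by linarith) (by rw [mwE_re, Real.cos_neg]; exact hk)
    have i2 := mw_int (s := ε - 1) (μ := ν) (r := mwE α) (by linarith) hν0 (by rw [mwE_re]; exact hk)
    have e : ν * (ε / ν) = ε := by field_simp
    have h2 := mw_subst (b := ε / ν) hν0 (mwE α)
    rw [e] at h2
    simp only [mwD, mul_sub]
    rw [integral_sub i1 i2, h2, mwE, mwE, mw_gamma_angle hε (by linarith) (by linarith),
      mw_gamma_angle (by positivity) (by linarith) (by linarith)]
    have a1 : -((ε : ℂ) * ((-α : ℝ) : ℂ)) = ((ε * α : ℝ) : ℂ) := by push_cast; ring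
    have a2 : -(((ε / ν : ℝ) : ℂ) * (α : ℂ)) = ((-(ε / ν * α) : ℝ) : ℂ) := by push_cast; ring
    rw [a1, a2, Complex.sub_im, Complex.im_mul_ofReal, ← Complex.ofReal_inv, Complex.im_ofReal_mul,
      Complex.im_mul_ofReal, Complex.exp_ofReal_mul_I_im, Complex.exp_ofReal_mul_I_im, Real.sin_neg]
    ring
  have hlim3 : Tendsto (fun ε : ℝ => Real.Gamma ε * Real.sin (ε * α) +
      ν⁻¹ * (Real.Gamma (ε / ν) * Real.sin ((ε / ν) * α))) (𝓝[>] 0) (𝓝 (α + ν⁻¹ * α)) := by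
    refine (mw_gsin α).add (Tendsto.const_mul _ ((mw_gsin α).comp ?_))
    refine tendsto_nhdsWithin_iff.2 ⟨?_, ?_⟩
    · have : ContinuousAt (fun ε : ℝ => ε / ν) 0 := by fun_prop
      have h := this.tendsto
      rw [zero_div] at h
      exact h.mono_left nhdsWithin_le_nhds
    · filter_upwards [self_mem_nhdsWithin] with ε hε
      exact div_pos hε hν0
  have hfin : α + ν⁻¹ * α = Real.pi := by
    field_simp
    linarith
  rw [hfin] at hlim3
  refine tendsto_nhds_unique hlim2 (hlim3.congr' ?_)
  filter_upwards [self_mem_nhdsWithin] with ε hε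
  exact (hval ε hε).symm

lemma mw_prod_int {ν α : ℝ} (hν0 : 0 < ν) (hα0 : 0 < α) (hα1 : α < Real.pi / 2) :
    Integrable (fun y : ℝ × ℝ => mwE α * ((y.2 ^ (ν - 1) : ℝ) : ℂ) *
      mwD ν α y.2 * Complex.exp (-(y.1 * mwE α * (y.2 ^ ν : ℝ))))
      ((volume.restrict (Ioi (0:ℝ))).prod (volume.restrict (Ioi (0:ℝ)))) := by
  have hk : 0 < Real.cos α := Real.cos_pos_of_mem_Ioo ⟨by linarith, hα1⟩
  have hD := mwD_meas ν α
  rw [integrable_prod_iff' (Measurable.aestronglyMeasurable (by fun_prop))]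
  have hre : ∀ t : ℝ, 0 < t → (-(mwE α * (t ^ ν : ℝ))).re < 0 := by
    intro t ht
    rw [Complex.neg_re, Complex.re_mul_ofReal, mwE_re]
    have : 0 < Real.cos α * t ^ ν := by positivity
    linarith
  constructor
  · filter_upwards [ae_restrict_mem measurableSet_Ioi] with t ht
    refine ((integrableOn_exp_mul_complex_Ioi (hre t ht) 0).const_mul
      (mwE α * ((t ^ (ν - 1) : ℝ) : ℂ) * mwD ν α t)).congr ?_
    filter_upwards with z
    congr 2
    ring
  · have := ((mwD_int hν0 hα0 hα1 0 le_rfl zero_le_one).norm).const_mul (Real.cos α)⁻¹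
    refine IntegrableOn.congr_fun this ?_ measurableSet_Ioi
    intro t ht
    have ht : 0 < t := ht
    have hc : -(Real.cos α * t ^ ν) < 0 := by
      have : 0 < Real.cos α * t ^ ν := by positivity
      linarith
    have e : ∀ z : ℝ, ‖mwE α * ((t ^ (ν - 1) : ℝ) : ℂ) *
      mwD ν α t * Complex.exp (-(z * mwE α * (t ^ ν : ℝ)))‖ =
      t ^ (ν - 1) * ‖mwD ν α t‖ * Real.exp (-(Real.cos α * t ^ ν) * z) := by
      intro z
      rw [norm_mul, norm_mul, norm_mul, mwE_norm, Complex.norm_exp, Complex.norm_real,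
        Real.norm_of_nonneg (by positivity), Complex.neg_re, Complex.re_mul_ofReal,
        Complex.re_ofReal_mul, mwE_re]
      ring_nf
    simp only [e]
    rw [integral_const_mul, integral_exp_mul_Ioi hc, norm_mul, Complex.norm_real,
        Real.norm_of_nonneg (by positivity), Real.rpow_sub_one ht.ne', Real.rpow_sub_one ht.ne']
    have : t ^ ν ≠ 0 := by positivity
    simp
    field_simp

lemma mw_total {ν : ℝ} (hν0 : 0 < ν) (hν1 : ν < 1) :
    ∫ z in Ioi (0:ℝ), mWright ν z = 1 := by
  obtain ⟨α, hα⟩ : ∃ α, α = Real.pi * ν / (1 + ν) := ⟨_, rfl⟩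
  have hα0 : 0 < α := by rw [hα]; positivity
  have hα1 : α < Real.pi / 2 := by
    rw [hα, div_lt_div_iff₀ (by linarith) (by norm_num)]
    nlinarith [Real.pi_pos]
  have hα : α * (1 + ν) = Real.pi * ν := by
    rw [hα]; field_simp
  have hk : 0 < Real.cos α := Real.cos_pos_of_mem_Ioo ⟨by linarith, hα1⟩
  have hP := mw_prod_int hν0 hα0 hα1
  have hI := hP.integral_prod_left
  have hsw := integral_integral_swap (f := fun z t : ℝ => mwE α * ((t ^ (ν - 1) : ℝ) : ℂ) *
      mwD ν α t * Complex.exp (-(z * mwE α * (t ^ ν : ℝ)))) hP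
  have e1 : ∫ z in Ioi (0:ℝ), mWright ν z = ∫ z in Ioi (0:ℝ),
      Real.pi⁻¹ * Complex.imCLM (∫ t in Ioi (0:ℝ), mwE α * ((t ^ (ν - 1) : ℝ) : ℂ) *
      mwD ν α t * Complex.exp (-(z * mwE α * (t ^ ν : ℝ)))) :=
    setIntegral_congr_fun measurableSet_Ioi fun z hz =>
      mw_repr2 hν0 hν1 hα0 hα1 hα z (le_of_lt hz)
  rw [e1, integral_const_mul, Complex.imCLM.integral_comp_comm hI, hsw]
  have e2 : ∫ t in Ioi (0:ℝ), ∫ z in Ioi (0:ℝ), mwE α * ((t ^ (ν - 1) : ℝ) : ℂ) *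
      mwD ν α t * Complex.exp (-(z * mwE α * (t ^ ν : ℝ))) =
      ∫ t in Ioi (0:ℝ), ((t ^ ((0:ℝ) - 1) : ℝ) : ℂ) * mwD ν α t := by
    refine setIntegral_congr_fun measurableSet_Ioi fun t ht => ?_
    have ht : 0 < t := ht
    have hre : (-(mwE α * (t ^ ν : ℝ))).re < 0 := by
      rw [Complex.neg_re, Complex.re_mul_ofReal, mwE_re]
      have : 0 < Real.cos α * t ^ ν := by positivity
      linarith
    have e : ∀ z : ℝ, -(z * mwE α * (t ^ ν : ℝ)) = -(mwE α * (t ^ ν : ℝ)) * z := by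
      intro z; ring
    simp only [e]
    rw [integral_const_mul, integral_exp_mul_complex_Ioi hre, Real.rpow_sub_one ht.ne',
      Real.rpow_sub_one ht.ne']
    have h1 : ((t ^ ν : ℝ) : ℂ) ≠ 0 := by exact_mod_cast (by positivity : t ^ ν ≠ 0)
    have h2 : (t : ℂ) ≠ 0 := by exact_mod_cast ht.ne'
    have h3 := mwE_ne α
    simp only [Complex.ofReal_zero, mul_zero, Complex.exp_zero, Real.rpow_zero, Complex.ofReal_div,
      Complex.ofReal_one]
    field_simp
  rw [e2, Complex.imCLM_apply, mw_frullani hν0 hα0 hα1 hα]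
  exact inv_mul_cancel₀ Real.pi_ne_zero

/-- The convolution solution of the Cauchy problem attains the initial datum:
for `0 < ν < 1` and `f : ℝ → ℝ` bounded and continuous, the space convolution
`u(x,t) = ∫ (1/(2 t^ν)) M_ν(|ξ|/t^ν) f(x-ξ) dξ` tends to `f(x)` as `t → 0⁺`,
for every `x ∈ ℝ`. -/
theorem cauchy_solution_attains_initial_datum
    (ν : ℝ) (hν0 : 0 < ν) (hν1 : ν < 1)
    (f : ℝ → ℝ) (hfc : Continuous f) (M : ℝ) (hM : ∀ x, |f x| ≤ M) (x : ℝ) :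
    Filter.Tendsto
      (fun t : ℝ => ∫ ξ : ℝ, 1 / (2 * t ^ ν) * mWright ν (|ξ| / t ^ ν) * f (x - ξ))
      (nhdsWithin 0 (Set.Ioi 0)) (nhds (f x)) := by

  have hI2 : ∫ s : ℝ, mWright ν |s| = 2 := by
    rw [integral_comp_abs, mw_total hν0 hν1, mul_one]
  have hInt : Integrable (fun s : ℝ => mWright ν |s|) := by
    by_contra h
    rw [integral_undef h] at hI2
    norm_num at hI2
  have hlim : Tendsto (fun t : ℝ => ∫ s : ℝ, 1 / 2 * mWright ν |s| * f (x - t ^ ν * s))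
      (𝓝[>] 0) (𝓝 (∫ s : ℝ, 1 / 2 * mWright ν |s| * f x)) := by
    apply tendsto_integral_filter_of_dominated_convergence (fun s => 1 / 2 * ‖mWright ν |s|‖ * M)
    · filter_upwards with t
      refine (hInt.aestronglyMeasurable.const_mul _).mul ?_
      exact Continuous.aestronglyMeasurable (by fun_prop)
    · filter_upwards with t
      filter_upwards with s
      rw [norm_mul, norm_mul, Real.norm_of_nonneg (by norm_num : (0:ℝ) ≤ 1 / 2)]
      gcongr
      exact hM _
    · exact (hInt.norm.const_mul _).mul_const _
    · filter_upwards with s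
      refine Tendsto.const_mul _ ?_
      have : ContinuousAt (fun t : ℝ => f (x - t ^ ν * s)) 0 := by
        have h0 : ContinuousAt (fun t : ℝ => t ^ ν) 0 :=
          Real.continuousAt_rpow_const _ _ (Or.inr hν0.le)
        exact ContinuousAt.comp' hfc.continuousAt (by fun_prop)
      have h := this.tendsto
      rw [Real.zero_rpow hν0.ne', zero_mul, sub_zero] at h
      exact h.mono_left nhdsWithin_le_nhds
  have hval : ∫ s : ℝ, 1 / 2 * mWright ν |s| * f x = f x := by
    rw [integral_mul_const, integral_const_mul, hI2]; norm_num
  rw [hval] at hlim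
  refine hlim.congr' ?_
  filter_upwards [self_mem_nhdsWithin] with t ht
  have hc : 0 < t ^ ν := Real.rpow_pos_of_pos ht ν
  have h := Measure.integral_comp_div
    (fun s : ℝ => 1 / (2 * t ^ ν) * mWright ν |s| * f (x - t ^ ν * s)) (t ^ ν)
  have e : ∀ ξ : ℝ, 1 / (2 * t ^ ν) * mWright ν |ξ / t ^ ν| * f (x - t ^ ν * (ξ / t ^ ν)) =
      1 / (2 * t ^ ν) * mWright ν (|ξ| / t ^ ν) * f (x - ξ) := by
    intro ξ
    rw [abs_div, abs_of_pos hc, mul_div_cancel₀ _ hc.ne']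
  simp only [e] at h
  rw [h, abs_of_pos hc, smul_eq_mul, ← integral_const_mul]
  congr 1
  ext s
  field_simp
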